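/- arXiv:1810.01922 — 4 statements merged into one kernel-verified Lean document; each statement's English description precedes it below -/
import Mathlib

section
/- Let Γ be a weighted doubled graph such that every loop of Γ has weight 1. Then any two paths of Γ with the same source and the same target have equal weight; i.e., if σ and σ′ are paths with s(σ) = s(σ′) and t(σ) = t(σ′), then μ(σ) = μ(σ′). -/
/-- A weighted doubled graph: finite vertex set `V`, finite edge set `E`,
source and target maps, an edge involution `op` reversing direction, and a
positive edge weighting `μ` with `μ (op e) = (μ e)⁻¹`. -/
structure WDGraph (V E : Type) [Fintype V] [Fintype E] where
  s : E → V
  t : E → V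
  op : E → E
  op_op : ∀ e, op (op e) = e
  s_op : ∀ e, s (op e) = t e
  t_op : ∀ e, t (op e) = s e
  μ : E → ℝ
  μ_pos : ∀ e, 0 < μ e
  μ_op : ∀ e, μ (op e) = (μ e)⁻¹

namespace WDGraph

variable {V E : Type} [Fintype V] [Fintype E]

/-- A path in a weighted doubled graph: a nonempty list of consecutively
composable edges. -/
structure Path (G : WDGraph V E) where
  edges : List E
  ne : edges ≠ []
  chain : edges.Chain' (fun a b => G.t a = G.s b)

variable {G : WDGraph V E}

/-- The source of a path: the source of its first edge. -/
def Path.source (p : G.Path) : V := G.s (p.edges.head p.ne)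

/-- The target of a path: the target of its last edge. -/
def Path.target (p : G.Path) : V := G.t (p.edges.getLast p.ne)

/-- The weight of a path: the product of the weights of its edges. -/
def Path.weight (p : G.Path) : ℝ := (p.edges.map G.μ).prod

/-- A loop is a path whose source equals its target. -/
def Path.IsLoop (p : G.Path) : Prop := p.source = p.target

/-- A graph is connected if any two distinct vertices are joined by a path. -/
def Connected (G : WDGraph V E) : Prop :=
  ∀ v w : V, v ≠ w → ∃ p : G.Path, p.source = v ∧ p.target = w

/-- A set of edges is `op`-closed if it is stable under the edge involution. -/
def OpClosed (G : WDGraph V E) (F : Set E) : Prop := ∀ e ∈ F, G.op e ∈ F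

/-- A set of edges is loop-trivial if every loop all of whose edges lie in it
has weight `1`. -/
def LoopTrivial (G : WDGraph V E) (F : Set E) : Prop :=
  ∀ p : G.Path, (∀ e ∈ p.edges, e ∈ F) → p.IsLoop → p.weight = 1

end WDGraph

open WDGraph in
/-- If every loop of a weighted doubled graph has weight `1`,
then any two paths with the same source and the same target have equal
weight. -/
theorem weight_eq_of_same_endpoints_of_loops_trivial
    {V E : Type} [Fintype V] [Fintype E] (G : WDGraph V E)
    (h : ∀ p : G.Path, p.IsLoop → p.weight = 1)
    (σ σ' : G.Path) (hs : σ.source = σ'.source) (ht : σ.target = σ'.target) :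
    σ.weight = σ'.weight := by
  obtain ⟨a, ha, ca⟩ := σ
  obtain ⟨b, hb, cb⟩ := σ'
  change G.s (a.head ha) = G.s (b.head hb) at hs
  change G.t (a.getLast ha) = G.t (b.getLast hb) at ht
  change (a.map G.μ).prod = (b.map G.μ).prod
  have hr : (b.map G.op).reverse ≠ [] := by simpa using hb
  have hne : a ++ (b.map G.op).reverse ≠ [] := by simp [ha]
  have hprod : ∀ l : List E, ((l.map G.op).map G.μ).prod * (l.map G.μ).prod = 1 := by
    intro l
    induction l with
    | nil => simp
    | cons e l ih =>
      have he := (G.μ_pos e).ne'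
      simp only [List.map_cons, List.prod_cons, G.μ_op]
      calc _ = ((G.μ e)⁻¹ * G.μ e) * (((l.map G.op).map G.μ).prod * (l.map G.μ).prod) := by ring
        _ = 1 := by rw [ih, inv_mul_cancel₀ he, one_mul]
  have hc : (a ++ (b.map G.op).reverse).IsChain (fun a b => G.t a = G.s b) := by
    rw [List.isChain_append]
    refine ⟨ca, ?_, ?_⟩
    · rw [List.isChain_reverse, List.isChain_map]
      refine List.IsChain.imp ?_ cb
      intro x y hxy
      simp [G.t_op, G.s_op, hxy]
    · intro x hx y hy
      rw [List.getLast?_eq_some_getLast ha] at hx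
      rw [List.head?_reverse, List.getLast?_map, List.getLast?_eq_some_getLast hb] at hy
      simp only [Option.map_some, Option.mem_some_iff] at hx hy
      rw [← hx, ← hy, G.s_op, ht]
  have key := h ⟨a ++ (b.map G.op).reverse, hne, hc⟩ (by
    change G.s ((a ++ (b.map G.op).reverse).head hne) =
      G.t ((a ++ (b.map G.op).reverse).getLast hne)
    rw [List.head_append_of_ne_nil ha, List.getLast_append_of_ne_nil _ hr,
      List.getLast_reverse, List.head_map, G.t_op, hs])
  simp only [Path.weight, List.map_append, List.prod_append, List.map_reverse,
    List.prod_reverse] at key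
  have hb1 := hprod b
  calc _ = (a.map G.μ).prod * (((b.map G.op).map G.μ).prod * (b.map G.μ).prod) := by
        rw [hb1, mul_one]
    _ = _ := by rw [← mul_assoc, key, one_mul]
end

section
/- Let Γ be a connected weighted doubled graph and let F ⊆ E be an op-closed subset that is maximal (with respect to inclusion) among op-closed loop-trivial subsets of E. Then F is spanning and connected: for any two distinct vertices v, w ∈ V there exists a path in F with source v and target w. -/
namespace WDGraph

/-- Possibly empty walks with edges in `F`, with recorded weight. -/
inductive Wk {V E : Type} [Fintype V] [Fintype E] (G : WDGraph V E) (F : Set E) :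
    V → V → ℝ → Prop
  | nil (v : V) : Wk G F v v 1
  | cons (e : E) (he : e ∈ F) (w : V) (x : ℝ) (h : Wk G F (G.t e) w x) :
      Wk G F (G.s e) w (G.μ e * x)

section
variable {V E : Type} [Fintype V] [Fintype E] {G : WDGraph V E} {F : Set E}

theorem Wk.trans {u v w : V} {x y : ℝ} (h : Wk G F u v x) (h' : Wk G F v w y) :
    Wk G F u w (x * y) := by
  induction h with
  | nil v => simpa using h'
  | cons e he w x h ih =>
    rw [mul_assoc]
    exact Wk.cons e he _ _ (ih h')

theorem Wk.single {e : E} (he : e ∈ F) : Wk G F (G.s e) (G.t e) (G.μ e) := by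
  have := Wk.cons e he _ _ (Wk.nil (G := G) (F := F) (G.t e))
  simpa using this

theorem Wk.symm (hF : G.OpClosed F) {u v : V} {x : ℝ} (h : Wk G F u v x) :
    Wk G F v u x⁻¹ := by
  induction h with
  | nil v => simpa using Wk.nil (G := G) (F := F) v
  | cons e he w x h ih =>
    have h1 := Wk.single (G := G) (hF e he)
    rw [G.s_op, G.t_op, G.μ_op] at h1
    have h2 := ih.trans h1
    rwa [← mul_inv_rev] at h2

theorem Wk.pos {u v : V} {x : ℝ} (h : Wk G F u v x) : 0 < x := by
  induction h with
  | nil v => exact one_pos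
  | cons e he w x h ih => exact mul_pos (G.μ_pos e) ih

theorem Wk.toPath {u v : V} {x : ℝ} (h : Wk G F u v x) :
    (u = v ∧ x = 1) ∨ ∃ p : G.Path, (∀ e ∈ p.edges, e ∈ F) ∧ p.source = u ∧ p.target = v ∧
      p.weight = x := by
  induction h with
  | nil v => exact Or.inl ⟨rfl, rfl⟩
  | cons e he w x h ih =>
    right
    rcases ih with ⟨h1, h2⟩ | ⟨⟨l, ne, ch⟩, hp, hs, ht, hw⟩
    · exact ⟨⟨[e], by simp, by simp [List.Chain']⟩, by simpa using he, rfl, h1,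
        by simp [Path.weight, h2]⟩
    · cases l with
      | nil => exact absurd rfl ne
      | cons b l =>
        refine ⟨⟨e :: b :: l, by simp, ?_⟩, ?_, rfl, ?_, ?_⟩
        · exact List.isChain_cons_cons.2 ⟨hs.symm, ch⟩
        · intro a ha
          rcases List.mem_cons.1 ha with rfl | ha
          · exact he
          · exact hp a ha
        · simpa [Path.target] using ht
        · simp only [Path.weight] at hw ⊢
          rw [List.map_cons, List.prod_cons, hw]

theorem wk_of_list (l : List E) (ne : l ≠ []) (ch : l.IsChain (fun a b => G.t a = G.s b))
    (hF : ∀ e ∈ l, e ∈ F) :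
    Wk G F (G.s (l.head ne)) (G.t (l.getLast ne)) (l.map G.μ).prod := by
  induction l with
  | nil => exact absurd rfl ne
  | cons a l ih =>
    cases l with
    | nil => simpa using Wk.single (G := G) (hF a (by simp))
    | cons b l =>
      obtain ⟨h1, h2⟩ := List.isChain_cons_cons.1 ch
      have h3 := ih (by simp) h2 (fun e he => hF e (List.mem_cons_of_mem _ he))
      have h4 : Wk G F (G.t a) (G.t ((b :: l).getLast (by simp))) ((b :: l).map G.μ).prod := by
        rw [h1]; exact h3
      have h5 := Wk.cons a (hF a (by simp)) _ _ h4
      rw [List.map_cons, List.prod_cons]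
      simpa using h5

theorem Path.wk (p : G.Path) (hF : ∀ e ∈ p.edges, e ∈ F) :
    Wk G F p.source p.target p.weight :=
  wk_of_list p.edges p.ne p.chain hF

theorem Wk.unique (hop : G.OpClosed F) (ht : G.LoopTrivial F) {u v : V} {x y : ℝ}
    (h : Wk G F u v x) (h' : Wk G F u v y) : x = y := by
  have hy := h'.pos
  have h1 : x * y⁻¹ = 1 := by
    rcases (h.trans (h'.symm hop)).toPath with ⟨_, h⟩ | ⟨p, hp, hs, htt, hw⟩
    · exact h
    · rw [← hw]; exact ht p hp (hs.trans htt.symm)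
  field_simp at h1
  exact h1

theorem Wk.potential {φ : V → ℝ} (hφ : ∀ e ∈ F, φ (G.s e) * G.μ e = φ (G.t e))
    {u v : V} {x : ℝ} (h : Wk G F u v x) : φ u * x = φ v := by
  induction h with
  | nil v => simp
  | cons e he w x h ih => rw [← mul_assoc, hφ e he, ih]

theorem loopTrivial_of_potential {φ : V → ℝ} (hpos : ∀ v, 0 < φ v)
    (hφ : ∀ e ∈ F, φ (G.s e) * G.μ e = φ (G.t e)) : G.LoopTrivial F := by
  intro p hp hl
  have h := (p.wk hp).potential hφ
  rw [← show p.source = p.target from hl] at h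
  exact (mul_eq_left₀ (hpos _).ne').1 h

theorem exists_potential (hop : G.OpClosed F) (ht : G.LoopTrivial F) :
    ∃ φ : V → ℝ, (∀ v, 0 < φ v) ∧ ∀ e ∈ F, φ (G.s e) * G.μ e = φ (G.t e) := by
  let S : Setoid V :=
    { r := fun u v => ∃ x, Wk G F u v x
      iseqv := ⟨fun v => ⟨1, Wk.nil v⟩, fun ⟨x, h⟩ => ⟨_, h.symm hop⟩,
        fun ⟨_, h⟩ ⟨_, h'⟩ => ⟨_, h.trans h'⟩⟩ }
  have hr : ∀ v : V, ∃ x, Wk G F (Quotient.mk S v).out v x := fun v => Quotient.mk_out (s := S) v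
  choose φ hφ using hr
  refine ⟨φ, fun v => (hφ v).pos, fun e he => ?_⟩
  have h1 := (hφ (G.s e)).trans (Wk.single he)
  have h2 : Quotient.mk S (G.s e) = Quotient.mk S (G.t e) := Quotient.sound ⟨_, Wk.single he⟩
  rw [h2] at h1
  exact h1.unique hop ht (hφ _)

theorem edge_connected (hop : G.OpClosed F) (ht : G.LoopTrivial F)
    (hmax : ∀ F' : Set E, G.OpClosed F' → G.LoopTrivial F' → F ⊆ F' → F = F') (e : E) :
    ∃ x, Wk G F (G.s e) (G.t e) x := by
  classical
  by_contra hne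
  obtain ⟨φ, hpos, hφ⟩ := exists_potential hop ht
  let c : ℝ := φ (G.s e) * G.μ e / φ (G.t e)
  have hc : 0 < c := div_pos (mul_pos (hpos _) (G.μ_pos e)) (hpos _)
  let ψ : V → ℝ := fun v => if ∃ x, Wk G F v (G.t e) x then c * φ v else φ v
  have hs : ψ (G.s e) = φ (G.s e) := if_neg hne
  have htt : ψ (G.t e) = φ (G.s e) * G.μ e := by
    have : ψ (G.t e) = c * φ (G.t e) := if_pos ⟨1, Wk.nil _⟩
    rw [this]
    exact div_mul_cancel₀ _ (hpos _).ne'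
  have key : F = F ∪ {e, G.op e} := by
    apply hmax _ _ _ Set.subset_union_left
    · rintro a (ha | rfl | rfl)
      · exact Or.inl (hop a ha)
      · exact Or.inr (Or.inr rfl)
      · rw [G.op_op]; exact Or.inr (Or.inl rfl)
    · apply loopTrivial_of_potential (φ := ψ)
      · intro v
        by_cases h : ∃ x, Wk G F v (G.t e) x
        · rw [show ψ v = c * φ v from if_pos h]; exact mul_pos hc (hpos v)
        · rw [show ψ v = φ v from if_neg h]; exact hpos v
      · rintro a (ha | rfl | rfl)
        · by_cases h : ∃ x, Wk G F (G.t a) (G.t e) x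
          · have h' : ∃ x, Wk G F (G.s a) (G.t e) x := by
              obtain ⟨x, hx⟩ := h
              exact ⟨_, (Wk.single ha).trans hx⟩
            rw [show ψ (G.s a) = c * φ _ from if_pos h', show ψ (G.t a) = c * φ _ from if_pos h,
              mul_assoc, hφ a ha]
          · have h' : ¬ ∃ x, Wk G F (G.s a) (G.t e) x := by
              rintro ⟨x, hx⟩
              exact h ⟨_, ((Wk.single ha).symm hop).trans hx⟩
            rw [show ψ (G.s a) = φ _ from if_neg h', show ψ (G.t a) = φ _ from if_neg h, hφ a ha]
        · rw [hs, htt]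
        · rw [G.s_op, G.t_op, G.μ_op, hs, htt]
          exact mul_inv_cancel_right₀ (G.μ_pos e).ne' _
  have he : e ∈ F := by rw [key]; exact Or.inr (Or.inl rfl)
  exact hne ⟨_, Wk.single he⟩

end

end WDGraph

open WDGraph in
/-- In a connected weighted doubled graph, a maximal
`op`-closed loop-trivial set of edges `F` is spanning and connected: any two
distinct vertices are joined by a path all of whose edges lie in `F`. -/
theorem maximal_loopTrivial_subgraph_spanning_connected
    {V E : Type} [Fintype V] [Fintype E] (G : WDGraph V E)
    (hconn : G.Connected) (F : Set E)
    (hFop : G.OpClosed F) (hFtriv : G.LoopTrivial F)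
    (hmax : ∀ F' : Set E, G.OpClosed F' → G.LoopTrivial F' → F ⊆ F' → F = F')
    (v w : V) (hvw : v ≠ w) :
    ∃ p : G.Path, (∀ e ∈ p.edges, e ∈ F) ∧ p.source = v ∧ p.target = w := by
  obtain ⟨q, hq, hq'⟩ := hconn v w hvw
  have h1 := q.wk (F := Set.univ) (fun _ _ => trivial)
  rw [hq, hq'] at h1
  have h2 : ∃ y, Wk G F v w y := by
    clear hq hq' hvw
    generalize q.weight = x at h1
    induction h1 with
    | nil v => exact ⟨1, Wk.nil v⟩
    | cons e he w x h ih =>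
      obtain ⟨y, hy⟩ := ih
      obtain ⟨z, hz⟩ := edge_connected hFop hFtriv hmax e
      exact ⟨_, hz.trans hy⟩
  obtain ⟨y, hy⟩ := h2
  rcases hy.toPath with ⟨h, _⟩ | ⟨p, hp, hs, ht, _⟩
  · exact absurd h hvw
  · exact ⟨p, hp, hs, ht⟩
end

section
/- Let λ₀ ∈ (0,1) and let x ∈ (0,1). Suppose that x is not of the form λ₀^ℓ·(1 − λ₀^k) for any integers ℓ ≥ 0 and k ≥ 1. Then there exist integers ℓ ≥ 0, k ≥ 0 and a real number t ∈ (0,1) such that x = (1−t)·λ₀^ℓ·(1−λ₀) + ∑_{j=1}^{k} λ₀^{ℓ+j}·(1−λ₀) + t·λ₀^{ℓ+k+1}·(1−λ₀); equivalently, there exist integers ℓ ≥ 0 and k ≥ 0 with λ₀^{ℓ+1}·(1 − λ₀^{k+1}) < x < λ₀^ℓ·(1 − λ₀^{k+1}). -/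
/-- If `λ₀ ∈ (0,1)` and `x ∈ (0,1)` is not of the form
`λ₀ ^ ℓ * (1 - λ₀ ^ k)` for integers `ℓ ≥ 0`, `k ≥ 1`, then there are
`ℓ, k ≥ 0` and `t ∈ (0,1)` with
`x = (1 - t) * λ₀ ^ ℓ * (1 - λ₀) + ∑_{j=1}^{k} λ₀ ^ (ℓ + j) * (1 - λ₀)
    + t * λ₀ ^ (ℓ + k + 1) * (1 - λ₀)`;
equivalently, `λ₀ ^ (ℓ + 1) * (1 - λ₀ ^ (k + 1)) < x < λ₀ ^ ℓ * (1 - λ₀ ^ (k + 1))`. -/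
theorem exists_level_and_parameter
    (lam x : ℝ) (h0 : 0 < lam) (h1 : lam < 1) (hx0 : 0 < x) (hx1 : x < 1)
    (hnot : ∀ l k : ℕ, 1 ≤ k → x ≠ lam ^ l * (1 - lam ^ k)) :
    ∃ l k : ℕ, ∃ t : ℝ, 0 < t ∧ t < 1 ∧
      x = (1 - t) * lam ^ l * (1 - lam)
          + (∑ j ∈ Finset.range k, lam ^ (l + j + 1) * (1 - lam))
          + t * lam ^ (l + k + 1) * (1 - lam) ∧
      lam ^ (l + 1) * (1 - lam ^ (k + 1)) < x ∧
      x < lam ^ l * (1 - lam ^ (k + 1)) := by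
  have hex : ∃ n : ℕ, lam ^ n ≤ x := by
    obtain ⟨n, hn⟩ := exists_pow_lt_of_lt_one hx0 h1
    exact ⟨n, hn.le⟩
  obtain ⟨l, hl1, hl2⟩ : ∃ l : ℕ, lam ^ (l + 1) ≤ x ∧ x < lam ^ l := by
    classical
    have hs := Nat.find_spec hex
    have hm : ∀ m, m < Nat.find hex → ¬ lam ^ m ≤ x := fun m hm => Nat.find_min hex hm
    generalize Nat.find hex = n at hs hm
    cases n with
    | zero => simp at hs; linarith
    | succ n => exact ⟨n, hs, not_le.mp (hm n (Nat.lt_succ_self n))⟩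
  have hp : 0 < lam ^ l := pow_pos h0 l
  have hp1 : 0 < lam ^ (l + 1) := pow_pos h0 _
  have hd : 0 < (lam ^ l - x) / lam ^ l := div_pos (by linarith) hp
  obtain ⟨k, hk⟩ := exists_pow_lt_of_lt_one hd h1
  rw [lt_div_iff₀ hp] at hk
  have hq : 0 < lam ^ (k + 1) := pow_pos h0 _
  have hqk : lam ^ (k + 1) ≤ lam ^ k := pow_le_pow_of_le_one h0.le h1.le (Nat.le_succ k)
  have hU : x < lam ^ l * (1 - lam ^ (k + 1)) := by nlinarith
  have hL : lam ^ (l + 1) * (1 - lam ^ (k + 1)) < x := by nlinarith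
  have hV : 0 < lam ^ l * (1 - lam ^ (k + 1)) * (1 - lam) :=
    mul_pos (by linarith) (by linarith)
  have hsum : ∀ k : ℕ, (∑ j ∈ Finset.range k, lam ^ (l + j + 1) * (1 - lam))
      = lam ^ (l + 1) * (1 - lam ^ k) := by
    intro k
    induction k with
    | zero => simp
    | succ k ih => rw [Finset.sum_range_succ, ih]; ring
  refine ⟨l, k, (lam ^ l * (1 - lam ^ (k + 1)) - x) /
    (lam ^ l * (1 - lam ^ (k + 1)) * (1 - lam)), div_pos (by linarith) hV, ?_, ?_, hL, hU⟩
  · rw [div_lt_one hV]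
    have : lam ^ (l + 1) = lam ^ l * lam := pow_succ _ _
    rw [this] at hL
    linarith
  · rw [hsum]
    have ht := div_mul_cancel₀ (lam ^ l * (1 - lam ^ (k + 1)) - x) hV.ne'
    generalize (lam ^ l * (1 - lam ^ (k + 1)) - x) /
      (lam ^ l * (1 - lam ^ (k + 1)) * (1 - lam)) = t at ht ⊢
    have e1 : lam ^ (l + 1) = lam ^ l * lam := pow_succ _ _
    have e2 : lam ^ (k + 1) = lam ^ k * lam := pow_succ _ _
    have e3 : lam ^ (l + k + 1) = lam ^ l * (lam ^ k * lam) := by ring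
    rw [e2] at ht
    rw [e1, e3]
    linear_combination ht
end

section
/- Let Γ be a weighted doubled graph possessing a loop σ with μ(σ) ≠ 1. Then Γ possesses a loop e₁⋯eₙ such that μ(e₁)·⋯·μ(eₙ) > 1 and such that every partial product satisfies μ(e₁)·⋯·μ(e_k) ≥ 1 for each k = 1, …, n. -/
open WDGraph in
theorem wd_aux {V E : Type} [Fintype V] [Fintype E] (G : WDGraph V E)
    (σ : G.Path) (hσ : σ.IsLoop) (hw : 1 < σ.weight) :
    ∃ p : G.Path, p.IsLoop ∧ 1 < p.weight ∧
      ∀ k, 1 ≤ k → k ≤ p.edges.length →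
        1 ≤ ((p.edges.take k).map G.μ).prod := by
  obtain ⟨l, ne, ch⟩ := σ
  simp only [Path.IsLoop, WDGraph.Path.source, WDGraph.Path.target, Path.weight] at hσ hw
  have pos : ∀ m : List E, 0 < (m.map G.μ).prod := by
    intro m
    apply List.prod_pos
    intro a ha
    obtain ⟨e, -, rfl⟩ := List.mem_map.1 ha
    exact G.μ_pos e
  obtain ⟨j, hj, hmin⟩ := Finset.exists_min_image (Finset.range (l.length + 1))
    (fun j => ((l.take j).map G.μ).prod) ⟨0, by simp⟩
  have hjl : j ≤ l.length := by simpa [Nat.lt_succ_iff] using hj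
  have hmin' : ∀ k, ((l.take j).map G.μ).prod ≤ ((l.take k).map G.μ).prod := by
    intro k
    rcases le_total k l.length with h | h
    · exact hmin k (by simpa [Nat.lt_succ_iff] using h)
    · have := hmin l.length (by simp)
      rw [List.take_of_length_le h]; rwa [List.take_length] at this
  clear hmin hj
  obtain ⟨A, hA⟩ : ∃ A, A = l.take j := ⟨_, rfl⟩
  obtain ⟨B, hB⟩ : ∃ B, B = l.drop j := ⟨_, rfl⟩
  have hl : l = A ++ B := by rw [hA, hB, List.take_append_drop]
  rw [← hA] at hmin'
  clear hA hB hjl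
  subst hl
  have hBne : B ≠ [] := by
    rintro rfl
    have := hmin' 0
    simp at this hw
    linarith
  have hWeq : ((B ++ A).map G.μ).prod = ((A ++ B).map G.μ).prod := by
    simp [mul_comm]
  have hpart : ∀ k, 1 ≤ (((B ++ A).take k).map G.μ).prod := by
    intro k
    have hA0 := pos A
    rw [List.take_append, List.map_append, List.prod_append]
    rcases le_total k B.length with h | h
    · have h1 := hmin' (A.length + k)
      rw [List.take_length_add_append, List.map_append, List.prod_append] at h1
      have : k - B.length = 0 := by omega
      rw [this]
      simp only [List.take_zero, List.map_nil, List.prod_nil, mul_one]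
      exact (le_mul_iff_one_le_right hA0).1 h1
    · rw [List.take_of_length_le h]
      rcases le_total (k - B.length) A.length with h2 | h2
      · have h1 := hmin' (k - B.length)
        rw [List.take_append_of_le_length h2] at h1
        have := mul_le_mul_of_nonneg_left h1 (pos B).le
        rw [← List.prod_append, ← List.map_append, hWeq] at this
        linarith
      · rw [List.take_of_length_le h2, ← List.prod_append, ← List.map_append, hWeq]
        exact hw.le
  have hch := List.isChain_append.1 ch
  by_cases hAne : A = []
  · subst hAne
    refine ⟨⟨_, ne, ch⟩, hσ, hw, fun k _ _ => ?_⟩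
    simpa using hpart k
  · refine ⟨⟨B ++ A, by simp [hAne], List.isChain_append.2 ⟨hch.2.1, hch.1, ?_⟩⟩, ?_, ?_,
      fun k _ _ => hpart k⟩
    · intro x hx y hy
      rw [List.head_append_of_ne_nil hAne, List.getLast_append_of_ne_nil _ hBne] at hσ
      rw [List.getLast?_eq_some_getLast hBne] at hx
      rw [List.head?_eq_some_head hAne] at hy
      simp at hx hy
      rw [← hx, ← hy, hσ]
    · simp only [Path.IsLoop, WDGraph.Path.source, WDGraph.Path.target]
      rw [List.head_append_of_ne_nil hBne, List.getLast_append_of_ne_nil _ hAne]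
      exact (hch.2.2 _ (by rw [List.getLast?_eq_some_getLast hAne]; simp) _
        (by rw [List.head?_eq_some_head hBne]; simp)).symm
    · simp only [Path.weight]
      rw [hWeq]; exact hw

open WDGraph in
/-- If a weighted doubled graph has a loop of weight `≠ 1`,
then it has a loop `e₁ ⋯ eₙ` with `μ(e₁) ⋯ μ(eₙ) > 1` and all partial products
`μ(e₁) ⋯ μ(e_k) ≥ 1` for `k = 1, …, n`. -/
theorem exists_loop_with_partial_products_ge_one
    {V E : Type} [Fintype V] [Fintype E] (G : WDGraph V E)
    (σ : G.Path) (hσ : σ.IsLoop) (hw : σ.weight ≠ 1) :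
    ∃ p : G.Path, p.IsLoop ∧ 1 < p.weight ∧
      ∀ k, 1 ≤ k → k ≤ p.edges.length →
        1 ≤ ((p.edges.take k).map G.μ).prod := by
  rcases lt_or_gt_of_ne hw with h | h
  · have hpos : 0 < σ.weight := by
      apply List.prod_pos
      intro a ha
      obtain ⟨e, -, rfl⟩ := List.mem_map.1 ha
      exact G.μ_pos e
    have key : ∀ m : List E, (((m.map G.op).reverse).map G.μ).prod = ((m.map G.μ).prod)⁻¹ := by
      intro m
      induction m with
      | nil => simp
      | cons a m ih => 
        simp only [List.map_cons, List.reverse_cons, List.map_append, List.prod_append, ih,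
          List.prod_cons, mul_inv, G.μ_op, List.map_nil, List.prod_nil, mul_one]
        ring
    refine wd_aux G ⟨(σ.edges.map G.op).reverse, by simp [σ.ne], ?_⟩ ?_ ?_
    · refine List.isChain_reverse.2 ((List.isChain_map _).2 ?_)
      refine List.IsChain.imp ?_ σ.chain
      intro a b hab
      simp [G.t_op, G.s_op, hab]
    · have h2 : G.s (σ.edges.head σ.ne) = G.t (σ.edges.getLast σ.ne) := hσ
      simp [Path.IsLoop, WDGraph.Path.source, WDGraph.Path.target, G.t_op, G.s_op, h2]
    · simp only [Path.weight, key]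
      exact (one_lt_inv₀ hpos).2 h
  · exact wd_aux G σ hσ h
end
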